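/- Let L ∈ 𝓛₂₉ with copies M₁, M₂ of M labeled as in the context, and suppose L admits no fractional hom(M)-tiling h with h_min ≥ 1/3 and w(h) ≥ 16 + 1/3. Let L₁ be the bipartite graph on V(M₁) × V(M₂) whose edges are the pairs (a,b) with {u,a,b} ∈ E(L) and {a,b} ∩ {w₁, w₂, w₁', w₂'} = ∅. Then L₁ is a subgraph of a complete bipartite graph K_{3,3} whose one vertex class contains exactly one vertex from each of X, Y, Z and whose other vertex class contains exactly one vertex from each of X', Y', Z'. -/

import Mathlib

open Finset

/-- The vertex set of a hypergraph in the family `𝓛₂₉`: two disjoint copies of the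
vertex set of `M` (each a copy of `Fin 8`) together with two extra vertices `u, v`.
The vertices of the first copy are labeled
`x₁ = m1 0, x₂ = m1 1, w₁ = m1 2, y₁ = m1 3, y₂ = m1 4, w₂ = m1 5, z₁ = m1 6, z₂ = m1 7`
(so the edges of `M₁` are `x₁x₂w₁`, `w₁y₁y₂`, `y₁y₂w₂`, `w₂z₁z₂`), and analogously for
the second copy with `m2`. -/
abbrev L29V : Type := (Fin 8 ⊕ Fin 8) ⊕ Fin 2

/-- The `i`-th vertex of the first copy `M₁` of `M`. -/
def m1 (i : Fin 8) : L29V := Sum.inl (Sum.inl i)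

/-- The `i`-th vertex of the second copy `M₂` of `M`. -/
def m2 (i : Fin 8) : L29V := Sum.inl (Sum.inr i)

/-- The two extra vertices `u` (for `i = 0`) and `v` (for `i = 1`). -/
def uv (i : Fin 2) : L29V := Sum.inr i

/-- The four edges of a copy of `M` with vertex embedding `c`. -/
def MEdgesOf (c : Fin 8 → L29V) : Finset (Finset L29V) :=
  {({c 0, c 1, c 2} : Finset L29V), {c 2, c 3, c 4}, {c 3, c 4, c 5}, {c 5, c 6, c 7}}

/-- `E` is the edge set of a member of the family `𝓛₂₉`. -/
def IsL29 (E : Finset (Finset L29V)) : Prop :=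
  (∀ e ∈ MEdgesOf m1, e ∈ E) ∧
  (∀ e ∈ MEdgesOf m2, e ∈ E) ∧
  (∀ e ∈ E, e ∈ MEdgesOf m1 ∨ e ∈ MEdgesOf m2 ∨
    ∃ (w : Fin 2) (a b : Fin 8), e = {uv w, m1 a, m2 b}) ∧
  (∀ a b : Fin 8, ({uv 0, m1 a, m2 b} : Finset L29V) ∈ E ↔
    ({uv 1, m1 a, m2 b} : Finset L29V) ∈ E) ∧
  (E.filter (fun e => uv 0 ∈ e)).card = (E.filter (fun e => uv 1 ∈ e)).card ∧
  29 ≤ (E.filter (fun e => uv 0 ∈ e)).card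

/-- `h` is a fractional `hom(M)`-tiling of the hypergraph with edge predicate `E`. -/
def IsFracHomTiling {α : Type} [Fintype α] [DecidableEq α]
    (E : Finset α → Prop) (h : α → Finset α → ℝ) : Prop :=
  (∀ v e, 0 ≤ h v e ∧ h v e ≤ 1) ∧
  (∀ v e, h v e ≠ 0 → E e ∧ v ∈ e) ∧
  (∀ v : α, ∑ e : Finset α, h v e ≤ 1) ∧
  (∀ e : Finset α, E e →
    ∃ u v w : α, e = {u, v, w} ∧ u ≠ v ∧ u ≠ w ∧ v ≠ w ∧
      h u e = h v e ∧ h w e ≤ h v e ∧ 2 / 3 * h u e ≤ h w e)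

/-- The weight `w(h)` of a fractional `hom(M)`-tiling. -/
def tilingWeight {α : Type} [Fintype α] [DecidableEq α] (h : α → Finset α → ℝ) : ℝ :=
  ∑ v : α, ∑ e : Finset α, h v e

/-!
If two vertices `a ≠ a'` of the same pair `X`, `Y` or `Z` were both non-isolated in `L₁`, there
would be edges `{u, a, b}` and, since `u` and `v` have the same link, `{v, a', b'}` with
`b, b' ∉ {w₁', w₂'}`. Give each of these two edges the weights `1/2, 1/2, 1/3` with `1/3` on `b` and
`b'`. The copy `M₁` has a weighting that leaves `1/2` free exactly at `a` and `a'` and otherwise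
saturates all vertices, of weight `7`; the copy `M₂` has one that leaves `1/3` free on the pair of
`b` and another `1/3` free on the pair of `b'`, of weight `20/3`. Together they form a tiling of
weight `7 + 20/3 + 2 · 4/3 = 16 + 1/3`. So at most one vertex of each pair is non-isolated, and the
same holds with the copies exchanged.
-/

/-- A weighted edge of a fractional `hom(M)`-tiling: in the edge `{a, b, c}` the vertices `a` and
`b` receive weight `hi` and `c` receives weight `lo`, as in condition (c) of the definition. -/
structure WeightedTriple (α : Type*) where
  (a b c : α)
  (hi lo : ℝ)

namespace WeightedTriple

section Triple

variable {α β : Type*}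

/-- The image of a weighted edge under a map of vertices. -/
def map (f : α → β) (t : WeightedTriple α) : WeightedTriple β :=
  ⟨f t.a, f t.b, f t.c, t.hi, t.lo⟩

/-- The conditions that a fractional `hom(M)`-tiling with `h_min ≥ 1/3` imposes on an edge of
nonzero weight. -/
structure Admissible (t : WeightedTriple α) : Prop where
  a_ne_b : t.a ≠ t.b
  a_ne_c : t.a ≠ t.c
  b_ne_c : t.b ≠ t.c
  third_le_lo : 1 / 3 ≤ t.lo
  lo_le_hi : t.lo ≤ t.hi
  two_thirds_mul_hi_le_lo : 2 / 3 * t.hi ≤ t.lo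

lemma Admissible.map {t : WeightedTriple α} (ht : t.Admissible) {f : α → β}
    (hf : Function.Injective f) : (t.map f).Admissible where
  a_ne_b := hf.ne ht.a_ne_b
  a_ne_c := hf.ne ht.a_ne_c
  b_ne_c := hf.ne ht.b_ne_c
  third_le_lo := ht.third_le_lo
  lo_le_hi := ht.lo_le_hi
  two_thirds_mul_hi_le_lo := ht.two_thirds_mul_hi_le_lo

variable [DecidableEq α] [DecidableEq β]

/-- The edge that carries the weights of `t`. -/
def edge (t : WeightedTriple α) : Finset α := {t.a, t.b, t.c}

/-- The weight that `t` puts on the vertex `v`, the value `h(v, t.edge)` of the tiling. The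
summands have disjoint supports only when `t.a`, `t.b`, `t.c` are distinct. -/
noncomputable def weight (t : WeightedTriple α) (v : α) : ℝ :=
  (if v = t.a then t.hi else 0) + (if v = t.b then t.hi else 0) + (if v = t.c then t.lo else 0)

lemma edge_map (f : α → β) (t : WeightedTriple α) : (t.map f).edge = t.edge.image f := by
  simp only [edge, map, image_insert, image_singleton]

lemma weight_map {f : α → β} (hf : Function.Injective f) (t : WeightedTriple α) (v : α) :
    (t.map f).weight (f v) = t.weight v := by
  simp only [weight, map, hf.eq_iff]

lemma weight_map_of_notMem_range {α : Type*} {f : α → β} (t : WeightedTriple α) {v : β}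
    (hv : v ∉ Set.range f) : (t.map f).weight v = 0 := by
  have hne (x : α) : v ≠ f x := fun h ↦ hv ⟨x, h.symm⟩
  simp [weight, map, hne]

lemma weight_eq_zero {t : WeightedTriple α} {v : α} (hv : v ∉ t.edge) : t.weight v = 0 := by
  simp only [edge, mem_insert, mem_singleton, not_or] at hv
  simp [weight, hv]

lemma sum_weight [Fintype α] (t : WeightedTriple α) : ∑ v, t.weight v = 2 * t.hi + t.lo := by
  simp only [weight, sum_add_distrib, sum_ite_eq', mem_univ, if_true]
  ring

namespace Admissible

variable {t : WeightedTriple α}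

lemma weight_a (ht : t.Admissible) : t.weight t.a = t.hi := by
  simp [weight, ht.a_ne_b, ht.a_ne_c]

lemma weight_b (ht : t.Admissible) : t.weight t.b = t.hi := by
  simp [weight, ht.a_ne_b.symm, ht.b_ne_c]

lemma weight_c (ht : t.Admissible) : t.weight t.c = t.lo := by
  simp [weight, ht.a_ne_c.symm, ht.b_ne_c.symm]

lemma third_le_weight (ht : t.Admissible) {v : α} (hv : v ∈ t.edge) : 1 / 3 ≤ t.weight v := by
  simp only [edge, mem_insert, mem_singleton] at hv
  obtain rfl | rfl | rfl := hv
  · exact ht.weight_a ▸ ht.third_le_lo.trans ht.lo_le_hi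
  · exact ht.weight_b ▸ ht.third_le_lo.trans ht.lo_le_hi
  · exact ht.weight_c ▸ ht.third_le_lo

lemma weight_nonneg (ht : t.Admissible) (v : α) : 0 ≤ t.weight v := by
  by_cases hv : v ∈ t.edge
  · linarith [ht.third_le_weight hv]
  · exact (weight_eq_zero hv).ge

end Admissible

end Triple

section Total

variable {α β : Type*}

/-- The weight `w(h)` of the tiling given by a list of weighted edges. -/
noncomputable def total (l : List (WeightedTriple α)) : ℝ :=
  (l.map fun t ↦ 2 * t.hi + t.lo).sum

lemma total_append (l l' : List (WeightedTriple α)) : total (l ++ l') = total l + total l' := by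
  simp only [total, List.map_append, List.sum_append]

lemma total_map (f : α → β) (l : List (WeightedTriple α)) : total (l.map (map f)) = total l := by
  simp only [total, List.map_map, Function.comp_def, map]

end Total

section Load

variable {α β : Type*} [DecidableEq α] [DecidableEq β]

/-- The total weight `h(v)` that a list of weighted edges puts on the vertex `v`. -/
noncomputable def load (l : List (WeightedTriple α)) (v : α) : ℝ :=
  (l.map (·.weight v)).sum

lemma load_nil (v : α) : load [] v = 0 := rfl

lemma load_cons (t : WeightedTriple α) (l : List (WeightedTriple α)) (v : α) :
    load (t :: l) v = t.weight v + load l v := by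
  simp only [load, List.map_cons, List.sum_cons]

lemma load_append (l l' : List (WeightedTriple α)) (v : α) :
    load (l ++ l') v = load l v + load l' v := by
  simp only [load, List.map_append, List.sum_append]

lemma load_map {f : α → β} (hf : Function.Injective f) (l : List (WeightedTriple α)) (v : α) :
    load (l.map (map f)) (f v) = load l v := by
  simp only [load, List.map_map, Function.comp_def, weight_map hf]

lemma load_map_of_notMem_range {α : Type*} {f : α → β} (l : List (WeightedTriple α)) {v : β}
    (hv : v ∉ Set.range f) : load (l.map (map f)) v = 0 := by
  simp [load, Function.comp_def, weight_map_of_notMem_range _ hv]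

lemma sum_load [Fintype α] (l : List (WeightedTriple α)) : ∑ v, load l v = total l := by
  induction l with
  | nil => simp [load, total]
  | cons t l ih => simp only [load_cons, sum_add_distrib, sum_weight, ih, total, List.map_cons,
      List.sum_cons]

/-- The function `h` of the tiling given by a list of weighted edges. -/
noncomputable def tiling (l : List (WeightedTriple α)) (v : α) (e : Finset α) : ℝ :=
  (l.map fun t ↦ if t.edge = e then t.weight v else 0).sum

lemma sum_tiling [Fintype α] (l : List (WeightedTriple α)) (v : α) :
    ∑ e, tiling l v e = load l v := by
  induction l with
  | nil => simp [load, tiling]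
  | cons t l ih =>
    simp only [tiling, List.map_cons, List.sum_cons, sum_add_distrib, sum_ite_eq, mem_univ,
      if_true, load_cons] at ih ⊢
    rw [ih]

lemma tiling_eq_zero {l : List (WeightedTriple α)} {e : Finset α} (he : e ∉ l.map edge) (v : α) :
    tiling l v e = 0 := by
  refine List.sum_eq_zero fun x hx ↦ ?_
  obtain ⟨t, ht, rfl⟩ := List.mem_map.1 hx
  exact if_neg fun hte ↦ he (List.mem_map.2 ⟨t, ht, hte⟩)

lemma tiling_edge {l : List (WeightedTriple α)} (hl : (l.map edge).Nodup) {t : WeightedTriple α}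
    (ht : t ∈ l) (v : α) : tiling l v t.edge = t.weight v := by
  induction l with
  | nil => simp at ht
  | cons s l ih =>
    rw [List.map_cons, List.nodup_cons] at hl
    have tiling_cons : tiling (s :: l) v t.edge =
        (if s.edge = t.edge then s.weight v else 0) + tiling l v t.edge := by
      simp only [tiling, List.map_cons, List.sum_cons]
    obtain rfl | htl := List.mem_cons.1 ht
    · rw [tiling_cons, if_pos rfl, tiling_eq_zero hl.1, add_zero]
    · have hst : s.edge ≠ t.edge := fun h ↦ hl.1 (h ▸ List.mem_map_of_mem htl)
      rw [tiling_cons, if_neg hst, ih hl.2 htl, zero_add]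

end Load

end WeightedTriple

open WeightedTriple

section IsWeighting

variable {α β : Type*} [DecidableEq α] [DecidableEq β] {E E' : Finset (Finset α)}
  {l l' : List (WeightedTriple α)}

/-- The list `l` assigns admissible weights to pairwise distinct edges belonging to `E`. Together
with `load l v ≤ 1` for all `v` this makes `l` a fractional `hom(M)`-tiling. -/
structure IsWeighting (E : Finset (Finset α)) (l : List (WeightedTriple α)) : Prop where
  edge_mem : ∀ t ∈ l, t.edge ∈ E
  admissible : ∀ t ∈ l, t.Admissible
  nodup : (l.map edge).Nodup

namespace IsWeighting

lemma mono (hl : IsWeighting E l) (hE : E ⊆ E') : IsWeighting E' l :=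
  ⟨fun t ht ↦ hE (hl.edge_mem t ht), hl.admissible, hl.nodup⟩

lemma map (hl : IsWeighting E l) {f : α → β} (hf : Function.Injective f) :
    IsWeighting (E.image (image f)) (l.map (map f)) where
  edge_mem := List.forall_mem_map.2 fun t ht ↦
    edge_map f t ▸ mem_image_of_mem _ (hl.edge_mem t ht)
  admissible := List.forall_mem_map.2 fun t ht ↦ (hl.admissible t ht).map hf
  nodup := by
    have edges_map : (l.map (WeightedTriple.map f)).map edge = (l.map edge).map (image f) := by
      simp only [List.map_map, Function.comp_def, edge_map]
    exact edges_map ▸ hl.nodup.map (image_injective hf)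

lemma append (hl : IsWeighting E l) (hl' : IsWeighting E' l') (hE : Disjoint E E') :
    IsWeighting (E ∪ E') (l ++ l') where
  edge_mem := List.forall_mem_append.2
    ⟨(hl.mono subset_union_left).edge_mem, (hl'.mono subset_union_right).edge_mem⟩
  admissible := List.forall_mem_append.2 ⟨hl.admissible, hl'.admissible⟩
  nodup := by
    rw [List.map_append]
    refine hl.nodup.append hl'.nodup fun e he he' ↦ ?_
    obtain ⟨t, ht, rfl⟩ := List.mem_map.1 he
    obtain ⟨t', ht', h⟩ := List.mem_map.1 he'
    exact disjoint_left.1 hE (hl.edge_mem t ht) (h ▸ hl'.edge_mem t' ht')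

lemma pair {s t : WeightedTriple α} (hs : s.Admissible) (ht : t.Admissible)
    (hst : s.edge ≠ t.edge) : IsWeighting {s.edge, t.edge} [s, t] where
  edge_mem := by simp
  admissible := by simp [hs, ht]
  nodup := by simp [hst]

lemma tiling_nonneg (hl : IsWeighting E l) (v : α) (e : Finset α) : 0 ≤ tiling l v e := by
  refine List.sum_nonneg (List.forall_mem_map.2 fun t ht ↦ ?_)
  split_ifs
  exacts [(hl.admissible t ht).weight_nonneg v, le_rfl]

lemma mem_of_tiling_ne_zero (hl : IsWeighting E l) {v : α} {e : Finset α}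
    (h : tiling l v e ≠ 0) : e ∈ E ∧ v ∈ e := by
  obtain ⟨t, ht, rfl⟩ := List.mem_map.1 (not_imp_comm.1 (tiling_eq_zero · v) h)
  rw [tiling_edge hl.nodup ht] at h
  exact ⟨hl.edge_mem t ht, not_imp_comm.1 weight_eq_zero h⟩

lemma third_le_tiling (hl : IsWeighting E l) {v : α} {e : Finset α} (h : tiling l v e ≠ 0) :
    1 / 3 ≤ tiling l v e := by
  obtain ⟨t, ht, rfl⟩ := List.mem_map.1 (not_imp_comm.1 (tiling_eq_zero · v) h)
  rw [tiling_edge hl.nodup ht]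
  exact (hl.admissible t ht).third_le_weight (hl.mem_of_tiling_ne_zero h).2

lemma exists_labeling (hl : IsWeighting E l) {e : Finset α} (he : #e = 3) :
    ∃ u v w : α, e = {u, v, w} ∧ u ≠ v ∧ u ≠ w ∧ v ≠ w ∧ tiling l u e = tiling l v e ∧
      tiling l w e ≤ tiling l v e ∧ 2 / 3 * tiling l u e ≤ tiling l w e := by
  by_cases hel : e ∈ l.map edge
  · obtain ⟨t, ht, rfl⟩ := List.mem_map.1 hel
    have hadm := hl.admissible t ht
    refine ⟨t.a, t.b, t.c, rfl, hadm.a_ne_b, hadm.a_ne_c, hadm.b_ne_c, ?_⟩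
    simp only [tiling_edge hl.nodup ht, hadm.weight_a, hadm.weight_b, hadm.weight_c, true_and]
    exact ⟨hadm.lo_le_hi, hadm.two_thirds_mul_hi_le_lo⟩
  · obtain ⟨u, v, w, huv, huw, hvw, rfl⟩ := card_eq_three.1 he
    exact ⟨u, v, w, rfl, huv, huw, hvw, by simp [tiling_eq_zero hel]⟩

lemma isFracHomTiling {α : Type} [Fintype α] [DecidableEq α] {E : Finset (Finset α)}
    {l : List (WeightedTriple α)} (hl : IsWeighting E l) (hE : ∀ e ∈ E, #e = 3)
    (hload : ∀ v, load l v ≤ 1) : IsFracHomTiling (· ∈ E) (tiling l) := by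
  have hsum (v : α) : ∑ e, tiling l v e ≤ 1 := sum_tiling l v ▸ hload v
  have hle (v : α) (e : Finset α) : tiling l v e ≤ 1 :=
    (single_le_sum (fun e _ ↦ hl.tiling_nonneg v e) (mem_univ e)).trans (hsum v)
  exact ⟨fun v e ↦ ⟨hl.tiling_nonneg v e, hle v e⟩,
    fun _ _ ↦ hl.mem_of_tiling_ne_zero, hsum,
    fun e he ↦ hl.exists_labeling (hE e he)⟩

end IsWeighting

end IsWeighting

/-- The hypergraph `E` has a fractional `hom(M)`-tiling with `h_min ≥ 1/3` and weight at least
`16 + 1/3`. -/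
def HasHeavyTiling {α : Type} [Fintype α] [DecidableEq α] (E : Finset (Finset α)) : Prop :=
  ∃ h : α → Finset α → ℝ, IsFracHomTiling (· ∈ E) h ∧
    (∀ v e, h v e ≠ 0 → 1 / 3 ≤ h v e) ∧ 16 + 1 / 3 ≤ tilingWeight h

lemma IsWeighting.hasHeavyTiling {α : Type} [Fintype α] [DecidableEq α] {E : Finset (Finset α)}
    {l : List (WeightedTriple α)} (hl : IsWeighting E l) (hE : ∀ e ∈ E, #e = 3)
    (hload : ∀ v, load l v ≤ 1) (htotal : 16 + 1 / 3 ≤ total l) : HasHeavyTiling E := by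
  refine ⟨tiling l, hl.isFracHomTiling hE hload, fun _ _ ↦ hl.third_le_tiling, ?_⟩
  simpa only [tilingWeight, sum_tiling, sum_load] using htotal

section SingleCopy

/-- The edge set of `M` on the vertex set `Fin 8`, numbered as in `L29V`. -/
def edgesM : Finset (Finset (Fin 8)) := {{0, 1, 2}, {2, 3, 4}, {3, 4, 5}, {5, 6, 7}}

lemma card_of_mem_edgesM : ∀ e ∈ edgesM, #e = 3 := by simp [edgesM]

/-- The pairs `X`, `Y`, `Z` of vertices of `M`. -/
def block : Fin 3 → Finset (Fin 8) := ![{0, 1}, {3, 4}, {6, 7}]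

lemma exists_mem_block : ∀ {a : Fin 8}, a ≠ 2 → a ≠ 5 → ∃ P, a ∈ block P := by decide

lemma block_nonempty : ∀ P, (block P).Nonempty := by decide

lemma card_block : ∀ P, #(block P) = 2 := by decide

/-- A weighting of `M` that leaves weight `1/2` free at both vertices of one block. -/
noncomputable def halfFree : Fin 3 → List (WeightedTriple (Fin 8))
  | 0 => [⟨0, 1, 2, 1/2, 1/3⟩, ⟨2, 3, 4, 2/3, 2/3⟩, ⟨3, 4, 5, 1/3, 1/3⟩, ⟨6, 7, 5, 1, 2/3⟩]
  | 1 => [⟨0, 1, 2, 1, 2/3⟩, ⟨3, 4, 2, 1/2, 1/3⟩, ⟨5, 6, 7, 1, 1⟩]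
  | 2 => [⟨0, 1, 2, 1, 2/3⟩, ⟨2, 3, 4, 1/3, 1/3⟩, ⟨3, 4, 5, 2/3, 2/3⟩, ⟨6, 7, 5, 1/2, 1/3⟩]

/-- A weighting of `M` that leaves weight `1/3` free at both vertices of each of two blocks, or
weight `2/3` free at both vertices of one block if the two coincide. -/
noncomputable def thirdFree : Fin 3 → Fin 3 → List (WeightedTriple (Fin 8))
  | 0, 0 => [⟨0, 1, 2, 1/3, 1/3⟩, ⟨2, 3, 4, 2/3, 2/3⟩, ⟨3, 4, 5, 1/3, 1/3⟩, ⟨6, 7, 5, 1, 2/3⟩]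
  | 1, 1 => [⟨0, 1, 2, 1, 2/3⟩, ⟨2, 3, 4, 1/3, 1/3⟩, ⟨5, 6, 7, 1, 1⟩]
  | 2, 2 => [⟨0, 1, 2, 1, 2/3⟩, ⟨2, 3, 4, 1/3, 1/3⟩, ⟨3, 4, 5, 2/3, 2/3⟩, ⟨5, 6, 7, 1/3, 1/3⟩]
  | 0, 1 | 1, 0 => [⟨0, 1, 2, 2/3, 1/2⟩, ⟨3, 4, 2, 2/3, 1/2⟩, ⟨5, 6, 7, 1, 1⟩]
  | 1, 2 | 2, 1 => [⟨0, 1, 2, 1, 1⟩, ⟨3, 4, 5, 2/3, 1/2⟩, ⟨6, 7, 5, 2/3, 1/2⟩]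
  | 0, 2 | 2, 0 =>
    [⟨0, 1, 2, 2/3, 1/2⟩, ⟨2, 3, 4, 1/2, 1/2⟩, ⟨3, 4, 5, 1/2, 1/2⟩, ⟨6, 7, 5, 2/3, 1/2⟩]

lemma isWeighting_halfFree (P : Fin 3) : IsWeighting edgesM (halfFree P) where
  edge_mem := by revert P; decide
  admissible := by
    fin_cases P <;> simp only [halfFree, List.forall_mem_cons] <;> repeat' constructor
    all_goals norm_num [Fin.ext_iff]
  nodup := by revert P; decide

lemma isWeighting_thirdFree (P Q : Fin 3) : IsWeighting edgesM (thirdFree P Q) where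
  edge_mem := by revert P Q; decide
  admissible := by
    fin_cases P <;> fin_cases Q <;> simp only [thirdFree, List.forall_mem_cons] <;>
      repeat' constructor
    all_goals norm_num [Fin.ext_iff]
  nodup := by revert P Q; decide

lemma load_halfFree (P : Fin 3) (i : Fin 8) :
    load (halfFree P) i = 1 - if i ∈ block P then 1 / 2 else 0 := by
  fin_cases P <;> fin_cases i <;>
    norm_num [halfFree, load_cons, load_nil, weight, block, Fin.ext_iff]

lemma load_thirdFree (P Q : Fin 3) (i : Fin 8) :
    load (thirdFree P Q) i =
      1 - (if i ∈ block P then 1 / 3 else 0) - if i ∈ block Q then 1 / 3 else 0 := by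
  fin_cases P <;> fin_cases Q <;> fin_cases i <;>
    norm_num [thirdFree, load_cons, load_nil, weight, block, Fin.ext_iff]

lemma total_halfFree (P : Fin 3) : total (halfFree P) = 7 := by
  simp only [← sum_load, load_halfFree, sum_sub_distrib, sum_ite_mem, univ_inter, sum_const,
    card_block, card_univ, Fintype.card_fin]
  norm_num

lemma total_thirdFree (P Q : Fin 3) : total (thirdFree P Q) = 20 / 3 := by
  simp only [← sum_load, load_thirdFree, sum_sub_distrib, sum_ite_mem, univ_inter, sum_const,
    card_block, card_univ, Fintype.card_fin]
  norm_num

end SingleCopy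

section TwoCopies

lemma m1_injective : Function.Injective m1 := Sum.inl_injective.comp Sum.inl_injective

lemma m2_injective : Function.Injective m2 := Sum.inl_injective.comp Sum.inr_injective

lemma image_edgesM (c : Fin 8 → L29V) : edgesM.image (image c) = MEdgesOf c := by
  simp only [edgesM, MEdgesOf, image_insert, image_singleton]

lemma card_of_mem_MEdgesOf {c : Fin 8 → L29V} (hc : Function.Injective c) {e : Finset L29V}
    (he : e ∈ MEdgesOf c) : #e = 3 := by
  rw [← image_edgesM] at he
  obtain ⟨s, hs, rfl⟩ := mem_image.1 he
  rw [card_image_of_injective s hc, card_of_mem_edgesM s hs]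

lemma mem_range_of_mem_MEdgesOf {c : Fin 8 → L29V} {e : Finset L29V} (he : e ∈ MEdgesOf c)
    {x : L29V} (hx : x ∈ e) : x ∈ Set.range c := by
  rw [← image_edgesM] at he
  obtain ⟨s, -, rfl⟩ := mem_image.1 he
  obtain ⟨i, -, rfl⟩ := mem_image.1 hx
  exact Set.mem_range_self i

lemma m1_notMem_range_m2 (i : Fin 8) : m1 i ∉ Set.range m2 := by simp [m1, m2]

lemma m2_notMem_range_m1 (i : Fin 8) : m2 i ∉ Set.range m1 := by simp [m1, m2]

lemma uv_notMem_range_m1 (i : Fin 2) : uv i ∉ Set.range m1 := by simp [m1, uv]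

lemma uv_notMem_range_m2 (i : Fin 2) : uv i ∉ Set.range m2 := by simp [m2, uv]

lemma disjoint_MEdgesOf : Disjoint (MEdgesOf m1) (MEdgesOf m2) := by
  refine disjoint_left.2 fun e h₁ h₂ ↦ ?_
  obtain ⟨x, hx⟩ : e.Nonempty := card_pos.1 (by simp [card_of_mem_MEdgesOf m1_injective h₁])
  obtain ⟨i, rfl⟩ := mem_range_of_mem_MEdgesOf h₁ hx
  exact m1_notMem_range_m2 i (mem_range_of_mem_MEdgesOf h₂ hx)

lemma uv_notMem_of_mem_MEdgesOf {e : Finset L29V} (he : e ∈ MEdgesOf m1 ∪ MEdgesOf m2)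
    (i : Fin 2) : uv i ∉ e := fun hx ↦ by
  obtain h | h := mem_union.1 he
  exacts [uv_notMem_range_m1 i (mem_range_of_mem_MEdgesOf h hx),
    uv_notMem_range_m2 i (mem_range_of_mem_MEdgesOf h hx)]

/-- The weighted edge `{uᵢ, a, b}` with `a` in the first and `b` in the second copy of `M`, in
which `b` is the vertex of smaller weight. -/
noncomputable def crossEdge (i : Fin 2) (a b : Fin 8) : WeightedTriple L29V :=
  ⟨uv i, m1 a, m2 b, 1/2, 1/3⟩

lemma admissible_crossEdge (i : Fin 2) (a b : Fin 8) : (crossEdge i a b).Admissible := by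
  refine ⟨?_, ?_, ?_, ?_, ?_, ?_⟩
  iterate 3 simp [crossEdge, uv, m1, m2]
  all_goals norm_num [crossEdge]

lemma edge_crossEdge_zero_ne_one (a b a' b' : Fin 8) :
    (crossEdge 0 a b).edge ≠ (crossEdge 1 a' b').edge := by
  intro h
  have huv : uv 0 ∈ (crossEdge 1 a' b').edge := h ▸ mem_insert_self _ _
  simp [crossEdge, edge, uv, m1, m2] at huv

/-- The tiling of weight `16 + 1/3` that uses two cross edges `{u, a, b}` and `{v, a', b'}`. The
blocks `P`, `Q`, `Q'` are meant to contain `{a, a'}`, `b` and `b'` respectively, so that the free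
weight in the two copies of `M` makes room for the cross edges. -/
noncomputable def crossTiling (P Q Q' : Fin 3) (a b a' b' : Fin 8) : List (WeightedTriple L29V) :=
  (halfFree P).map (map m1) ++ (thirdFree Q Q').map (map m2) ++
    [crossEdge 0 a b, crossEdge 1 a' b']

variable {P Q Q' : Fin 3} {a b a' b' : Fin 8}

lemma isWeighting_crossTiling :
    IsWeighting (MEdgesOf m1 ∪ MEdgesOf m2 ∪ {(crossEdge 0 a b).edge, (crossEdge 1 a' b').edge})
      (crossTiling P Q Q' a b a' b') := by
  have hM₁ := (isWeighting_halfFree P).map m1_injective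
  have hM₂ := (isWeighting_thirdFree Q Q').map m2_injective
  have hcross := IsWeighting.pair (admissible_crossEdge 0 a b) (admissible_crossEdge 1 a' b')
    (edge_crossEdge_zero_ne_one a b a' b')
  rw [image_edgesM] at hM₁ hM₂
  refine (hM₁.append hM₂ disjoint_MEdgesOf).append hcross (disjoint_left.2 fun e he he' ↦ ?_)
  obtain rfl | rfl := by simpa only [mem_insert, mem_singleton] using he'
  all_goals exact uv_notMem_of_mem_MEdgesOf he _ (mem_insert_self _ _)

lemma total_crossTiling : total (crossTiling P Q Q' a b a' b') = 16 + 1 / 3 := by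
  have hcross : total [crossEdge 0 a b, crossEdge 1 a' b'] = 8 / 3 := by
    norm_num [total, crossEdge]
  rw [crossTiling, total_append, total_append, total_map, total_map, total_halfFree,
    total_thirdFree, hcross]
  norm_num

lemma load_crossTiling_m1_le_one (ha : a ∈ block P) (ha' : a' ∈ block P) (hne : a ≠ a')
    (i : Fin 8) : load (crossTiling P Q Q' a b a' b') (m1 i) ≤ 1 := by
  have hcross : load [crossEdge 0 a b, crossEdge 1 a' b'] (m1 i) =
      (if i = a then 1 / 2 else 0) + if i = a' then 1 / 2 else 0 := by
    simp [load, crossEdge, weight, uv, m1, m2]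
  rw [crossTiling, load_append, load_append, load_map m1_injective,
    load_map_of_notMem_range _ (m1_notMem_range_m2 i), load_halfFree, hcross]
  by_cases hia : i = a
  · subst hia
    norm_num [ha, hne]
  · by_cases hia' : i = a'
    · subst hia'
      norm_num [ha', hia]
    · simp only [hia, hia', if_false]
      split_ifs <;> norm_num

lemma load_crossTiling_m2_le_one (hb : b ∈ block Q) (hb' : b' ∈ block Q') (i : Fin 8) :
    load (crossTiling P Q Q' a b a' b') (m2 i) ≤ 1 := by
  have hcross : load [crossEdge 0 a b, crossEdge 1 a' b'] (m2 i) =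
      (if i = b then 1 / 3 else 0) + if i = b' then 1 / 3 else 0 := by
    simp [load, crossEdge, weight, uv, m1, m2]
  have hfree {c : Fin 8} {R : Fin 3} (hc : c ∈ block R) :
      (if i = c then (1 / 3 : ℝ) else 0) ≤ if i ∈ block R then 1 / 3 else 0 := by
    by_cases hic : i = c
    · simp [hic, hc]
    · rw [if_neg hic]
      positivity
  rw [crossTiling, load_append, load_append, load_map m2_injective,
    load_map_of_notMem_range _ (m2_notMem_range_m1 i), load_thirdFree, hcross]
  linarith [hfree hb, hfree hb']

lemma load_crossTiling_uv_le_one (i : Fin 2) :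
    load (crossTiling P Q Q' a b a' b') (uv i) ≤ 1 := by
  have hcross : load [crossEdge 0 a b, crossEdge 1 a' b'] (uv i) = 1 / 2 := by
    fin_cases i <;> simp [load, crossEdge, weight, uv, m1, m2]
  rw [crossTiling, load_append, load_append, load_map_of_notMem_range _ (uv_notMem_range_m1 i),
    load_map_of_notMem_range _ (uv_notMem_range_m2 i), hcross]
  norm_num

lemma load_crossTiling_le_one (ha : a ∈ block P) (ha' : a' ∈ block P) (hne : a ≠ a')
    (hb : b ∈ block Q) (hb' : b' ∈ block Q') (x : L29V) :
    load (crossTiling P Q Q' a b a' b') x ≤ 1 := by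
  rcases x with (i | i) | i
  · exact load_crossTiling_m1_le_one ha ha' hne i
  · exact load_crossTiling_m2_le_one hb hb' i
  · exact load_crossTiling_uv_le_one i

end TwoCopies

/-- A 3-uniform hypergraph `E` containing, via the injection `f`, two disjoint copies of `M` and
two further vertices `u`, `v` such that `v` forms an edge with each pair from the two copies with
which `u` does. Members of `𝓛₂₉` are of this kind with `f = id`. -/
structure IsTwinExtension {α : Type*} [DecidableEq α] (E : Finset (Finset α)) (f : L29V → α) :
    Prop where
  card_edge : ∀ e ∈ E, #e = 3
  injective : Function.Injective f
  image_mem_of_mem_m1 : ∀ e ∈ MEdgesOf m1, e.image f ∈ E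
  image_mem_of_mem_m2 : ∀ e ∈ MEdgesOf m2, e.image f ∈ E
  twin : ∀ a b, {f (uv 0), f (m1 a), f (m2 b)} ∈ E → {f (uv 1), f (m1 a), f (m2 b)} ∈ E

/-- The exchange of the two copies of `M`. -/
def swapCopies : L29V ≃ L29V := (Equiv.sumComm _ _).sumCongr (Equiv.refl _)

lemma image_swapCopies_MEdgesOf (c : Fin 8 → L29V) :
    (MEdgesOf c).image (image swapCopies) = MEdgesOf (swapCopies ∘ c) := by
  rw [← image_edgesM, ← image_edgesM, image_image]
  simp only [Function.comp_def, image_image]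

/-- The vertex `a` of the first copy of `M` has a neighbour outside `{w₁', w₂'}` in the link of `u`.
For `a ∉ {w₁, w₂}` this says that `a` is not isolated in `L₁`; applied to `f ∘ swapCopies` it is
the same notion for the second copy. -/
def IsL1Vertex {α : Type*} [DecidableEq α] (E : Finset (Finset α)) (f : L29V → α) (a : Fin 8) :
    Prop :=
  ∃ b, b ≠ 2 ∧ b ≠ 5 ∧ {f (uv 0), f (m1 a), f (m2 b)} ∈ E

lemma exists_mem_forall_eq {ι : Type*} {s : Finset ι} (hs : s.Nonempty) {A : ι → Prop}
    (hA : ∀ a ∈ s, ∀ a' ∈ s, A a → A a' → a = a') : ∃ p ∈ s, ∀ a ∈ s, A a → a = p := by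
  by_cases h : ∃ p ∈ s, A p
  · obtain ⟨p, hp, hAp⟩ := h
    exact ⟨p, hp, fun a ha hAa ↦ hA a ha p hp hAa hAp⟩
  · obtain ⟨p, hp⟩ := hs
    exact ⟨p, hp, fun a ha hAa ↦ (h ⟨a, ha, hAa⟩).elim⟩

namespace IsTwinExtension

lemma swap {α : Type*} [DecidableEq α] {E : Finset (Finset α)} {f : L29V → α}
    (hE : IsTwinExtension E f) : IsTwinExtension E (f ∘ swapCopies) where
  card_edge := hE.card_edge
  injective := hE.injective.comp swapCopies.injective
  image_mem_of_mem_m1 e he := by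
    rw [← image_image]
    exact hE.image_mem_of_mem_m2 _ (image_swapCopies_MEdgesOf m1 ▸ mem_image_of_mem _ he)
  image_mem_of_mem_m2 e he := by
    rw [← image_image]
    exact hE.image_mem_of_mem_m1 _ (image_swapCopies_MEdgesOf m2 ▸ mem_image_of_mem _ he)
  twin a b h := by
    rw [pair_comm] at h ⊢
    exact hE.twin b a h

variable {α : Type} [Fintype α] [DecidableEq α] {E : Finset (Finset α)} {f : L29V → α}

lemma hasHeavyTiling (hE : IsTwinExtension E f) {P Q Q' : Fin 3} {a b a' b' : Fin 8}
    (ha : a ∈ block P) (ha' : a' ∈ block P) (hne : a ≠ a') (hb : b ∈ block Q) (hb' : b' ∈ block Q')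
    (hab : {f (uv 0), f (m1 a), f (m2 b)} ∈ E) (hab' : {f (uv 1), f (m1 a'), f (m2 b')} ∈ E) :
    HasHeavyTiling E := by
  have hl := (isWeighting_crossTiling (P := P) (Q := Q) (Q' := Q') (a := a) (b := b)
    (a' := a') (b' := b')).map hE.injective
  have hsub : (MEdgesOf m1 ∪ MEdgesOf m2 ∪
      {(crossEdge 0 a b).edge, (crossEdge 1 a' b').edge}).image (image f) ⊆ E := by
    simp only [image_subset_iff, mem_union, or_imp, forall_and, mem_insert, mem_singleton,
      forall_eq, crossEdge, edge, image_insert, image_singleton]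
    exact ⟨⟨hE.image_mem_of_mem_m1, hE.image_mem_of_mem_m2⟩, hab, hab'⟩
  refine (hl.mono hsub).hasHeavyTiling hE.card_edge (fun y ↦ ?_) ?_
  · by_cases hy : y ∈ Set.range f
    · obtain ⟨x, rfl⟩ := hy
      exact load_map hE.injective _ x ▸ load_crossTiling_le_one ha ha' hne hb hb' x
    · exact load_map_of_notMem_range _ hy ▸ zero_le_one
  · rw [total_map, total_crossTiling]

lemma eq_of_isL1Vertex (hE : IsTwinExtension E f) (hno : ¬ HasHeavyTiling E) {P : Fin 3}
    {a a' : Fin 8} (ha : a ∈ block P) (ha' : a' ∈ block P) (hL : IsL1Vertex E f a)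
    (hL' : IsL1Vertex E f a') : a = a' := by
  obtain ⟨b, hb2, hb5, hab⟩ := hL
  obtain ⟨b', hb2', hb5', hab'⟩ := hL'
  obtain ⟨Q, hb⟩ := exists_mem_block hb2 hb5
  obtain ⟨Q', hb'⟩ := exists_mem_block hb2' hb5'
  by_contra hne
  exact hno (hE.hasHeavyTiling ha ha' hne hb hb' hab (hE.twin _ _ hab'))

lemma exists_transversal (hE : IsTwinExtension E f) (hno : ¬ HasHeavyTiling E) :
    ∃ p q r : Fin 8, (p = 0 ∨ p = 1) ∧ (q = 3 ∨ q = 4) ∧ (r = 6 ∨ r = 7) ∧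
      ∀ a, a ≠ 2 → a ≠ 5 → IsL1Vertex E f a → a = p ∨ a = q ∨ a = r := by
  choose p hp hpL using fun P ↦ exists_mem_forall_eq (block_nonempty P)
    fun a ha a' ha' ↦ hE.eq_of_isL1Vertex hno ha ha'
  refine ⟨p 0, p 1, p 2, by simpa [block] using hp 0, by simpa [block] using hp 1,
    by simpa [block] using hp 2, fun a h2 h5 hL ↦ ?_⟩
  obtain ⟨P, haP⟩ := exists_mem_block h2 h5
  have hap := hpL P a haP hL
  fin_cases P
  exacts [.inl hap, .inr (.inl hap), .inr (.inr hap)]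

end IsTwinExtension

theorem L1_subgraph_of_K33_general {α : Type} [Fintype α] [DecidableEq α] {E : Finset (Finset α)}
    {f : L29V → α} (hE : IsTwinExtension E f) (hno : ¬ HasHeavyTiling E) :
    ∃ p q r p' q' r' : Fin 8,
      (p = 0 ∨ p = 1) ∧ (q = 3 ∨ q = 4) ∧ (r = 6 ∨ r = 7) ∧
      (p' = 0 ∨ p' = 1) ∧ (q' = 3 ∨ q' = 4) ∧ (r' = 6 ∨ r' = 7) ∧
      ∀ a b : Fin 8, {f (uv 0), f (m1 a), f (m2 b)} ∈ E →
        a ≠ 2 → a ≠ 5 → b ≠ 2 → b ≠ 5 →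
        (a = p ∨ a = q ∨ a = r) ∧ (b = p' ∨ b = q' ∨ b = r') := by
  obtain ⟨p, q, r, hp, hq, hr, hL⟩ := hE.exists_transversal hno
  obtain ⟨p', q', r', hp', hq', hr', hL'⟩ := hE.swap.exists_transversal hno
  refine ⟨p, q, r, p', q', r', hp, hq, hr, hp', hq', hr', fun a b hab ha2 ha5 hb2 hb5 ↦
    ⟨hL a ha2 ha5 ⟨b, hb2, hb5, hab⟩, hL' b hb2 hb5 ⟨a, ha2, ha5, ?_⟩⟩⟩
  rwa [pair_comm] at hab

lemma IsL29.isTwinExtension {E : Finset (Finset L29V)} (hE : IsL29 E) : IsTwinExtension E id where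
  card_edge e he := by
    obtain h | h | ⟨w, a, b, rfl⟩ := hE.2.2.1 e he
    · exact card_of_mem_MEdgesOf m1_injective h
    · exact card_of_mem_MEdgesOf m2_injective h
    · exact card_eq_three.2 ⟨_, _, _, by simp [uv, m1], by simp [uv, m2], by simp [m1, m2], rfl⟩
  injective := Function.injective_id
  image_mem_of_mem_m1 e he := by simpa only [image_id] using hE.1 e he
  image_mem_of_mem_m2 e he := by simpa only [image_id] using hE.2.1 e he
  twin a b := (hE.2.2.2.1 a b).1

/-- If `L ∈ 𝓛₂₉` admits no fractional `hom(M)`-tiling with `h_min ≥ 1/3` and weight at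
least `16 + 1/3`, then the bipartite graph `L₁` (the pairs `(a, b)` with
`{u, a, b} ∈ E(L)` avoiding `w₁, w₂, w₁', w₂'`, i.e. avoiding the indices `2` and `5`
on both sides) is a subgraph of a `K₃,₃` having exactly one vertex in each of
`X = {x₁,x₂}`, `Y = {y₁,y₂}`, `Z = {z₁,z₂}` (indices `{0,1}`, `{3,4}`, `{6,7}`) and
exactly one vertex in each of `X'`, `Y'`, `Z'`. -/
theorem L1_subgraph_of_K33 (E : Finset (Finset L29V)) (hE : IsL29 E)
    (hno : ¬ ∃ h : L29V → Finset L29V → ℝ,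
      IsFracHomTiling (· ∈ E) h ∧
      (∀ v e, h v e ≠ 0 → 1 / 3 ≤ h v e) ∧
      16 + 1 / 3 ≤ tilingWeight h) :
    ∃ p q r p' q' r' : Fin 8,
      (p = 0 ∨ p = 1) ∧ (q = 3 ∨ q = 4) ∧ (r = 6 ∨ r = 7) ∧
      (p' = 0 ∨ p' = 1) ∧ (q' = 3 ∨ q' = 4) ∧ (r' = 6 ∨ r' = 7) ∧
      ∀ a b : Fin 8, ({uv 0, m1 a, m2 b} : Finset L29V) ∈ E →
        a ≠ 2 → a ≠ 5 → b ≠ 2 → b ≠ 5 →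
        (a = p ∨ a = q ∨ a = r) ∧ (b = p' ∨ b = q' ∨ b = r') :=
  L1_subgraph_of_K33_general hE.isTwinExtension hno
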